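/- arXiv:1902.08720 — 2 statements merged into one kernel-verified Lean document; each statement's English description precedes it below -/
import Mathlib

section
/- Let ⟨α,α'⟩ be an (m,n)-shuffle. The assignment sending each i ∈ ⌜⟨α,α'⟩ to the unique (m,n)-shuffle ⟨β,β'⟩ with β(j) = α(j) for j ≠ i and β(i) = α(i) + 1 is a bijection between the upper-left corner set ⌜⟨α,α'⟩ and the set of immediate successors of ⟨α,α'⟩ in the poset of (m,n)-shuffles. -/
/-- Extend a map `Fin (N+1) → Fin (M+1)` to a `ℕ`-valued map on all of `ℕ`,
clamping the input to the range `{0, …, N}`. -/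
def extendFin {N M : ℕ} (f : Fin (N + 1) → Fin (M + 1)) (i : ℕ) : ℕ :=
  (f ⟨min i N, Nat.lt_succ_of_le (min_le_right i N)⟩ : ℕ)

/-- `⟨α, α'⟩` is an `(m,n)`-shuffle: both maps are monotone surjections and
`α i + α' i = i` for all `i`. -/
def IsShuffle (m n : ℕ) (α : Fin (m + n + 1) → Fin (m + 1))
    (α' : Fin (m + n + 1) → Fin (n + 1)) : Prop :=
  Monotone α ∧ Monotone α' ∧ Function.Surjective α ∧ Function.Surjective α' ∧
    ∀ i : Fin (m + n + 1), (α i : ℕ) + (α' i : ℕ) = (i : ℕ)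

/-- The pointwise order on `(m,n)`-shuffles (a shuffle is determined by its
first component). -/
def ShuffleLE (m n : ℕ) (α β : Fin (m + n + 1) → Fin (m + 1)) : Prop :=
  ∀ i, α i ≤ β i

/-- The strict pointwise order on `(m,n)`-shuffles. -/
def ShuffleLT (m n : ℕ) (α β : Fin (m + n + 1) → Fin (m + 1)) : Prop :=
  ShuffleLE m n α β ∧ α ≠ β

/-- The lower-right corner set `⌞⟨α,α'⟩`: all `i` with `1 ≤ i ≤ m+n-1` such that
`α(i+1) = α(i) = α(i-1)+1`. -/
def lrCorner (m n : ℕ) (α : Fin (m + n + 1) → Fin (m + 1)) : Set ℕ :=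
  {i | 1 ≤ i ∧ i + 1 ≤ m + n ∧
    extendFin α (i + 1) = extendFin α i ∧ extendFin α i = extendFin α (i - 1) + 1}

/-- The upper-left corner set `⌜⟨α,α'⟩`: all `i` with `1 ≤ i ≤ m+n-1` such that
`α(i+1) = α(i)+1 = α(i-1)+1`. -/
def ulCorner (m n : ℕ) (α : Fin (m + n + 1) → Fin (m + 1)) : Set ℕ :=
  {i | 1 ≤ i ∧ i + 1 ≤ m + n ∧
    extendFin α (i + 1) = extendFin α i + 1 ∧ extendFin α i = extendFin α (i - 1)}

/-- `⟨β,β'⟩` is an immediate predecessor of `⟨α,α'⟩`: it is a shuffle, `β < α`,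
and no shuffle lies strictly between them. -/
def IsImmPred (m n : ℕ)
    (β : Fin (m + n + 1) → Fin (m + 1)) (β' : Fin (m + n + 1) → Fin (n + 1))
    (α : Fin (m + n + 1) → Fin (m + 1)) (α' : Fin (m + n + 1) → Fin (n + 1)) : Prop :=
  IsShuffle m n β β' ∧ ShuffleLT m n β α ∧
    ∀ (γ : Fin (m + n + 1) → Fin (m + 1)) (γ' : Fin (m + n + 1) → Fin (n + 1)),
      IsShuffle m n γ γ' → ¬ (ShuffleLT m n β γ ∧ ShuffleLT m n γ α)

/-- `⟨γ,γ'⟩` is an immediate successor of `⟨α,α'⟩`: it is a shuffle, `α < γ`,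
and no shuffle lies strictly between them. -/
def IsImmSucc (m n : ℕ)
    (γ : Fin (m + n + 1) → Fin (m + 1)) (γ' : Fin (m + n + 1) → Fin (n + 1))
    (α : Fin (m + n + 1) → Fin (m + 1)) (α' : Fin (m + n + 1) → Fin (n + 1)) : Prop :=
  IsShuffle m n γ γ' ∧ ShuffleLT m n α γ ∧
    ∀ (δ : Fin (m + n + 1) → Fin (m + 1)) (δ' : Fin (m + n + 1) → Fin (n + 1)),
      IsShuffle m n δ δ' → ¬ (ShuffleLT m n α δ ∧ ShuffleLT m n δ γ)

theorem extendFin_val {N M : ℕ} (f : Fin (N + 1) → Fin (M + 1)) (j : Fin (N + 1)) :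
    extendFin f j = (f j : ℕ) := by
  have : min (j : ℕ) N = j := by have := j.2; omega
  simp only [extendFin, this]

theorem extendFin_of_le {N M : ℕ} (f : Fin (N + 1) → Fin (M + 1)) (j : ℕ) (h : j ≤ N) :
    extendFin f j = (f ⟨j, by omega⟩ : ℕ) :=
  extendFin_val f ⟨j, by omega⟩

theorem extendFin_le {N M : ℕ} (f : Fin (N + 1) → Fin (M + 1)) (j : ℕ) :
    extendFin f j ≤ M := by
  have := (f ⟨min j N, Nat.lt_succ_of_le (min_le_right j N)⟩).2
  unfold extendFin
  omega

theorem extendFin_ext {N M : ℕ} {f g : Fin (N + 1) → Fin (M + 1)}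
    (h : ∀ j ≤ N, extendFin f j = extendFin g j) : f = g := by
  funext j
  have := h j (by omega)
  rw [extendFin_val, extendFin_val] at this
  exact Fin.ext this

theorem nat_mono {N : ℕ} {f : ℕ → ℕ} (h : ∀ i < N, f i ≤ f (i + 1)) (i j : ℕ)
    (hij : i ≤ j) (hj : j ≤ N) : f i ≤ f j := by
  induction j, hij using Nat.le_induction with
  | base => exact le_rfl
  | succ k _ ih => exact (ih (by omega)).trans (h k (by omega))

theorem nat_ivt {f : ℕ → ℕ} (N : ℕ) (h0 : f 0 = 0)
    (h : ∀ i < N, f (i + 1) ≤ f i + 1) (k : ℕ) (hk : k ≤ f N) : ∃ i ≤ N, f i = k := by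
  induction N with
  | zero => exact ⟨0, le_rfl, by omega⟩
  | succ N ih =>
    by_cases hh : k ≤ f N
    · obtain ⟨i, hi, e⟩ := ih (fun i hi => h i (by omega)) hh
      exact ⟨i, by omega, e⟩
    · exact ⟨N + 1, le_rfl, by have := h N (by omega); omega⟩

theorem mono_surj {N M : ℕ} (f : Fin (N + 1) → Fin (M + 1))
    (h0 : extendFin f 0 = 0) (hN : extendFin f N = M)
    (h : ∀ i < N, extendFin f i ≤ extendFin f (i + 1) ∧
      extendFin f (i + 1) ≤ extendFin f i + 1) : Monotone f ∧ Function.Surjective f := by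
  constructor
  · intro i j hij
    have := nat_mono (f := extendFin f) (fun i hi => (h i hi).1) i j hij (by omega)
    rw [extendFin_val, extendFin_val] at this
    exact this
  · intro k
    obtain ⟨i, hi, e⟩ := nat_ivt (f := extendFin f) N h0 (fun i hi => (h i hi).2) k
      (by rw [hN]; omega)
    rw [extendFin_of_le f i hi] at e
    exact ⟨_, Fin.ext e⟩

theorem isShuffle_iff (m n : ℕ) (α : Fin (m + n + 1) → Fin (m + 1))
    (α' : Fin (m + n + 1) → Fin (n + 1)) :
    IsShuffle m n α α' ↔ (∀ i ≤ m + n, extendFin α i + extendFin α' i = i) ∧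
      ∀ i < m + n, extendFin α i ≤ extendFin α (i + 1) ∧
        extendFin α (i + 1) ≤ extendFin α i + 1 := by
  constructor
  · rintro ⟨h1, h2, -, -, h5⟩
    have hs : ∀ i ≤ m + n, extendFin α i + extendFin α' i = i := by
      intro i hi
      rw [extendFin_of_le _ _ hi, extendFin_of_le _ _ hi]
      exact h5 _
    refine ⟨hs, fun i hi => ?_⟩
    have e1 := hs i hi.le
    have e2 := hs (i + 1) hi
    have a1 : extendFin α i ≤ extendFin α (i + 1) := by
      rw [extendFin_of_le _ _ hi.le, extendFin_of_le _ _ (by omega : i + 1 ≤ m + n)]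
      exact h1 (by simp [Fin.le_def])
    have a2 : extendFin α' i ≤ extendFin α' (i + 1) := by
      rw [extendFin_of_le _ _ hi.le, extendFin_of_le _ _ (by omega : i + 1 ≤ m + n)]
      exact h2 (by simp [Fin.le_def])
    omega
  · rintro ⟨hs, h⟩
    have z := hs 0 (by omega)
    have t := hs (m + n) le_rfl
    have l1 := extendFin_le α (m + n)
    have l2 := extendFin_le α' (m + n)
    obtain ⟨p1, p2⟩ := mono_surj α (by omega) (by omega) h
    obtain ⟨q1, q2⟩ := mono_surj α' (by omega) (by omega) (by
      intro i hi
      have := hs i hi.le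
      have := hs (i + 1) hi
      have := h i hi
      omega)
    refine ⟨p1, q1, p2, q2, fun i => ?_⟩
    have := hs i (by omega)
    rwa [extendFin_val, extendFin_val] at this

theorem shuffleLE_iff (m n : ℕ) (α β : Fin (m + n + 1) → Fin (m + 1)) :
    ShuffleLE m n α β ↔ ∀ i ≤ m + n, extendFin α i ≤ extendFin β i := by
  constructor
  · intro h i hi
    rw [extendFin_of_le _ _ hi, extendFin_of_le _ _ hi]
    exact h _
  · intro h i
    have := h i (by omega)
    rwa [extendFin_val, extendFin_val] at this

/-- Raise the value at `i` by one. -/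
def raiseAt (m n : ℕ) (α : Fin (m + n + 1) → Fin (m + 1)) (i : ℕ) :
    Fin (m + n + 1) → Fin (m + 1) :=
  fun j => if (j : ℕ) = i then ⟨min ((α j : ℕ) + 1) m, by omega⟩ else α j

/-- Lower the value at `i` by one. -/
def lowerAt (m n : ℕ) (α' : Fin (m + n + 1) → Fin (n + 1)) (i : ℕ) :
    Fin (m + n + 1) → Fin (n + 1) :=
  fun j => if (j : ℕ) = i then ⟨(α' j : ℕ) - 1, by omega⟩ else α' j

theorem ext_raiseAt (m n : ℕ) (α : Fin (m + n + 1) → Fin (m + 1)) (i j : ℕ) (hj : j ≤ m + n) :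
    extendFin (raiseAt m n α i) j =
      if j = i then min (extendFin α j + 1) m else extendFin α j := by
  rw [extendFin_of_le _ _ hj, extendFin_of_le _ _ hj]
  unfold raiseAt
  split_ifs <;> rfl

theorem ext_lowerAt (m n : ℕ) (α : Fin (m + n + 1) → Fin (n + 1)) (i j : ℕ) (hj : j ≤ m + n) :
    extendFin (lowerAt m n α i) j =
      if j = i then extendFin α j - 1 else extendFin α j := by
  rw [extendFin_of_le _ _ hj, extendFin_of_le _ _ hj]
  unfold lowerAt
  split_ifs <;> rfl

theorem ext_raiseAt_corner (m n : ℕ) (α : Fin (m + n + 1) → Fin (m + 1)) (i : ℕ)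
    (hi : i ∈ ulCorner m n α) (j : ℕ) (hj : j ≤ m + n) :
    extendFin (raiseAt m n α i) j =
      if j = i then extendFin α j + 1 else extendFin α j := by
  rw [ext_raiseAt _ _ _ _ _ hj]
  obtain ⟨h1, h2, h3, h4⟩ := hi
  have := extendFin_le α (i + 1)
  split_ifs with h
  · subst h; omega
  · rfl

theorem raise_isShuffle (m n : ℕ) (α : Fin (m + n + 1) → Fin (m + 1))
    (α' : Fin (m + n + 1) → Fin (n + 1)) (hα : IsShuffle m n α α') (i : ℕ)
    (hi : i ∈ ulCorner m n α) :
    IsShuffle m n (raiseAt m n α i) (lowerAt m n α' i) := by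
  have hr := ext_raiseAt_corner m n α i hi
  rw [isShuffle_iff] at hα ⊢
  obtain ⟨hs, h⟩ := hα
  obtain ⟨h1, h2, h3, h4⟩ := hi
  constructor
  · intro j hj
    rw [hr j hj, ext_lowerAt _ _ _ _ _ hj]
    have := hs j hj
    split_ifs with e
    · subst e
      have := hs (j - 1) (by omega)
      omega
    · exact this
  · intro j hj
    rw [hr j hj.le, hr (j + 1) hj]
    have := h j hj
    split_ifs with e1 e2 e2
    · omega
    · subst e1; omega
    · subst e2
      simp only [Nat.add_sub_cancel] at h4
      omega
    · exact this

theorem raise_lt (m n : ℕ) (α : Fin (m + n + 1) → Fin (m + 1)) (i : ℕ)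
    (hi : i ∈ ulCorner m n α) : ShuffleLT m n α (raiseAt m n α i) := by
  have hr := ext_raiseAt_corner m n α i hi
  obtain ⟨h1, h2, h3, h4⟩ := hi
  constructor
  · rw [shuffleLE_iff]
    intro j hj
    rw [hr j hj]
    split_ifs <;> omega
  · intro e
    have := hr i (by omega)
    rw [← e, if_pos rfl] at this
    omega

theorem exists_corner (m n : ℕ) (α γ : Fin (m + n + 1) → Fin (m + 1))
    (α' γ' : Fin (m + n + 1) → Fin (n + 1)) (hα : IsShuffle m n α α')
    (hγ : IsShuffle m n γ γ') (hlt : ShuffleLT m n α γ) :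
    ∃ i ∈ ulCorner m n α, extendFin α i < extendFin γ i := by
  rw [isShuffle_iff] at hα hγ
  obtain ⟨hs, h⟩ := hα
  obtain ⟨gs, g⟩ := hγ
  obtain ⟨hle, hne⟩ := hlt
  rw [shuffleLE_iff] at hle
  have am := nat_mono (f := extendFin α) (fun i hi => (h i hi).1)
  have gm := nat_mono (f := extendFin γ) (fun i hi => (g i hi).1)
  have ex : ∃ i, i ≤ m + n ∧ extendFin α i < extendFin γ i := by
    by_contra hc
    push Not at hc
    exact hne (extendFin_ext fun j hj => le_antisymm (hle j hj) (hc j hj))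
  classical
  obtain ⟨i0, ⟨hi0, hl⟩, hmin⟩ : ∃ i, (i ≤ m + n ∧ extendFin α i < extendFin γ i) ∧
      ∀ j < i, ¬ (j ≤ m + n ∧ extendFin α j < extendFin γ j) :=
    ⟨Nat.find ex, Nat.find_spec ex, fun j hj => Nat.find_min ex hj⟩
  have pos : 1 ≤ i0 := by
    by_contra hc
    have : i0 = 0 := by omega
    subst this
    have := gs 0 (by omega)
    omega
  have flat : extendFin α i0 = extendFin α (i0 - 1) := by
    have a := hmin (i0 - 1) (by omega)
    have b := h (i0 - 1) (by omega)
    have c := g (i0 - 1) (by omega)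
    rw [Nat.sub_add_cancel pos] at b c
    omega
  have t := hs (m + n) le_rfl
  have l1 := extendFin_le α (m + n)
  have l2 := extendFin_le α' (m + n)
  have l3 := extendFin_le γ i0
  have ex2 : ∃ k, k ≤ m + n ∧ extendFin α i0 < extendFin α k := ⟨m + n, le_rfl, by omega⟩
  obtain ⟨k, ⟨hk, hkl⟩, kmin⟩ : ∃ i, (i ≤ m + n ∧ extendFin α i0 < extendFin α i) ∧
      ∀ j < i, ¬ (j ≤ m + n ∧ extendFin α i0 < extendFin α j) :=
    ⟨Nat.find ex2, Nat.find_spec ex2, fun j hj => Nat.find_min ex2 hj⟩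
  have hik : i0 < k := by
    by_contra hc
    have := am k i0 (by omega) hi0
    omega
  obtain ⟨i, rfl⟩ : ∃ i, k = i + 1 := ⟨k - 1, by omega⟩
  have e1 : extendFin α i = extendFin α i0 := by
    have := kmin i (by omega)
    have := am i0 i (by omega) (by omega)
    omega
  refine ⟨i, ⟨by omega, hk, ?_, ?_⟩, ?_⟩
  · have := h i (by omega)
    omega
  · rcases Nat.lt_or_ge i0 i with hh | hh
    · have := kmin (i - 1) (by omega)
      have := am i0 (i - 1) (by omega) (by omega)
      omega
    · have : i = i0 := by omega
      rw [this, flat]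
  · have := gm i0 i (by omega) (by omega)
    omega

/-- The assignment sending each `i` in the upper-left corner set of a shuffle
`⟨α,α'⟩` to the unique shuffle agreeing with `α` away from `i` and taking the
value `α i + 1` at `i` is a bijection onto the set of immediate successors of
`⟨α,α'⟩`. -/
theorem ulCorner_bijOn_immSucc (m n : ℕ)
    (α : Fin (m + n + 1) → Fin (m + 1)) (α' : Fin (m + n + 1) → Fin (n + 1))
    (hα : IsShuffle m n α α') :
    ∃ Φ : ℕ → (Fin (m + n + 1) → Fin (m + 1)) × (Fin (m + n + 1) → Fin (n + 1)),
      (∀ i ∈ ulCorner m n α,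
        (∀ j : Fin (m + n + 1), (j : ℕ) ≠ i → (Φ i).1 j = α j) ∧
          extendFin (Φ i).1 i = extendFin α i + 1) ∧
      Set.BijOn Φ (ulCorner m n α)
        {p : (Fin (m + n + 1) → Fin (m + 1)) × (Fin (m + n + 1) → Fin (n + 1)) |
          IsImmSucc m n p.1 p.2 α α'} := by
  refine ⟨fun i => (raiseAt m n α i, lowerAt m n α' i), ?_, ?_, ?_, ?_⟩
  · intro i hi
    refine ⟨fun j hj => by simp [raiseAt, hj], ?_⟩
    have := hi.2.1
    simp [ext_raiseAt_corner m n α i hi i (by omega)]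
  · intro i hi
    refine ⟨raise_isShuffle m n α α' hα i hi, raise_lt m n α i hi, ?_⟩
    rintro δ δ' hδ ⟨⟨u1, u2⟩, ⟨v1, v2⟩⟩
    rw [shuffleLE_iff] at u1 v1
    have hr := ext_raiseAt_corner m n α i hi
    have him : i ≤ m + n := by have := hi.2.1; omega
    have off : ∀ j ≤ m + n, j ≠ i → extendFin δ j = extendFin α j := by
      intro j hj hji
      have a := u1 j hj
      have b := v1 j hj
      rw [hr j hj, if_neg hji] at b
      omega
    have a := u1 i him
    have b := v1 i him
    rw [hr i him, if_pos rfl] at b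
    rcases Nat.lt_or_ge (extendFin α i) (extendFin δ i) with c | c
    · refine v2 (extendFin_ext fun j hj => ?_)
      rw [hr j hj]
      split_ifs with e
      · subst e; omega
      · exact off j hj e
    · refine u2 (extendFin_ext fun j hj => ?_)
      by_cases e : j = i
      · subst e; omega
      · exact (off j hj e).symm
  · intro i hi k hk hik
    by_contra hne
    have e : raiseAt m n α i = raiseAt m n α k := (Prod.ext_iff.1 hik).1
    have him : i ≤ m + n := by have := hi.2.1; omega
    have a := ext_raiseAt_corner m n α i hi i him
    rw [e, ext_raiseAt_corner m n α k hk i him, if_pos rfl, if_neg hne] at a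
    omega
  · rintro ⟨γ, γ'⟩ ⟨hγ, hlt, himm⟩
    obtain ⟨i, hi, hl⟩ := exists_corner m n α γ α' γ' hα hγ hlt
    refine ⟨i, hi, ?_⟩
    have hS := raise_isShuffle m n α α' hα i hi
    have e : raiseAt m n α i = γ := by
      by_contra hne
      refine himm _ _ hS ⟨raise_lt m n α i hi, ?_, hne⟩
      have hle := hlt.1
      simp only [shuffleLE_iff] at hle ⊢
      intro j hj
      rw [ext_raiseAt_corner m n α i hi j hj]
      split_ifs with e
      · subst e; exact hl
      · exact hle j hj
    refine Prod.ext e (extendFin_ext fun j hj => ?_)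
    have a := ((isShuffle_iff _ _ _ _).1 hS).1 j hj
    have b := ((isShuffle_iff _ _ _ _).1 hγ).1 j hj
    rw [e] at a
    simp only at a b ⊢
    omega
end

section
/- Let ⟨α,α'⟩ and ⟨β,β'⟩ be (m,n)-shuffles with ⟨β,β'⟩ < ⟨α,α'⟩. Then ⟨β,β'⟩ is an immediate predecessor of ⟨α,α'⟩ if and only if there is exactly one index j with β(j) ≠ α(j); and in that case this j lies in ⌞⟨α,α'⟩ and satisfies α(j) = β(j) + 1. -/
theorem shuffle_step {m n : ℕ} {α : Fin (m + n + 1) → Fin (m + 1)}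
    {α' : Fin (m + n + 1) → Fin (n + 1)} (h : IsShuffle m n α α')
    (i k : Fin (m + n + 1)) (hik : (k : ℕ) = i + 1) :
    (α i : ℕ) ≤ α k ∧ (α k : ℕ) ≤ α i + 1 := by
  obtain ⟨h1, h2, -, -, h5⟩ := h
  have hle : i ≤ k := by rw [Fin.le_def]; omega
  have a1 : (α i : ℕ) ≤ α k := h1 hle
  have a2 : (α' i : ℕ) ≤ α' k := h2 hle
  have := h5 i
  have := h5 k
  omega

theorem shuffle_lt_interior {m n : ℕ} {α β : Fin (m + n + 1) → Fin (m + 1)}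
    {α' β' : Fin (m + n + 1) → Fin (n + 1)} (hα : IsShuffle m n α α')
    (hβ : IsShuffle m n β β') (j : Fin (m + n + 1)) (hj : (β j : ℕ) < α j) :
    1 ≤ (j : ℕ) ∧ (j : ℕ) + 1 ≤ m + n := by
  have := hα.2.2.2.2 j
  have := hβ.2.2.2.2 j
  have := (α j).2
  have := (β' j).2
  have := j.2
  omega

theorem exists_corner_s11 {m n : ℕ} {α β : Fin (m + n + 1) → Fin (m + 1)}
    {α' β' : Fin (m + n + 1) → Fin (n + 1)} (hα : IsShuffle m n α α')
    (hβ : IsShuffle m n β β') (hlt : ShuffleLT m n β α) :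
    ∃ p j q : Fin (m + n + 1), (j : ℕ) = p + 1 ∧ (q : ℕ) = j + 1 ∧ (β j : ℕ) < α j ∧
      (α j : ℕ) = α p + 1 ∧ (α q : ℕ) = α j := by
  have hne : (Finset.univ.filter (fun j => (β j : ℕ) < α j)).Nonempty := by
    obtain ⟨j, hj⟩ := Function.ne_iff.1 hlt.2
    refine ⟨j, ?_⟩
    simp only [Finset.mem_filter, Finset.mem_univ, true_and]
    exact lt_of_le_of_ne (hlt.1 j) (fun h => hj (Fin.ext h))
  obtain ⟨j, hj, hmax⟩ := Finset.exists_max_image _ (fun j => (α j : ℤ) - (α' j : ℤ)) hne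
  simp only [Finset.mem_filter, Finset.mem_univ, true_and] at hj hmax
  obtain ⟨h1, h2⟩ := shuffle_lt_interior hα hβ j hj
  have ej := hα.2.2.2.2 j
  let p : Fin (m + n + 1) := ⟨j - 1, by omega⟩
  let q : Fin (m + n + 1) := ⟨j + 1, by omega⟩
  have hp : (j : ℕ) = p + 1 := by simp only [p]; omega
  have hq : (q : ℕ) = j + 1 := rfl
  have ep := hα.2.2.2.2 p
  have eq := hα.2.2.2.2 q
  have sp := shuffle_step hα p j hp
  have sq := shuffle_step hα j q hq
  have tp := shuffle_step hβ p j hp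
  have tq := shuffle_step hβ j q hq
  have mp := hmax p
  have mq := hmax q
  refine ⟨p, j, q, hp, hq, hj, ?_, ?_⟩
  · by_contra hc
    have := mp (by omega)
    omega
  · by_contra hc
    have := mq (by omega)
    omega

theorem exists_lower {m n : ℕ} {α : Fin (m + n + 1) → Fin (m + 1)}
    {α' : Fin (m + n + 1) → Fin (n + 1)} (hα : IsShuffle m n α α')
    (p j q : Fin (m + n + 1)) (hp : (j : ℕ) = p + 1) (hq : (q : ℕ) = j + 1)
    (hpj : (α j : ℕ) = α p + 1) (hqj : (α q : ℕ) = α j) :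
    ∃ γ γ', IsShuffle m n γ γ' ∧ (α j : ℕ) = γ j + 1 ∧ ∀ i, i ≠ j → γ i = α i := by
  obtain ⟨h1, h2, h3, h4, h5⟩ := hα
  have ep := h5 p
  have ej := h5 j
  have eq := h5 q
  have hpne : p ≠ j := fun h => by rw [h] at hp; omega
  have hqne : q ≠ j := fun h => by rw [h] at hq; omega
  have g0 : α' p = α' j := Fin.ext (by omega)
  have g1 : (α' q : ℕ) = α' j + 1 := by omega
  refine ⟨Function.update α j (α p), Function.update α' j (α' q), ⟨?_, ?_, ?_, ?_, ?_⟩, ?_, ?_⟩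
  · intro x y hxy
    by_cases hx : x = j <;> by_cases hy : y = j
    · rw [hx, hy]
    · subst hx
      rw [Function.update_self, Function.update_of_ne hy]
      exact h1 (le_trans (by rw [Fin.le_def]; omega) hxy)
    · subst hy
      rw [Function.update_self, Function.update_of_ne hx]
      apply h1
      have := lt_of_le_of_ne hxy hx
      rw [Fin.lt_def] at this
      rw [Fin.le_def]; omega
    · rw [Function.update_of_ne hx, Function.update_of_ne hy]
      exact h1 hxy
  · intro x y hxy
    by_cases hx : x = j <;> by_cases hy : y = j
    · rw [hx, hy]
    · subst hx
      rw [Function.update_self, Function.update_of_ne hy]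
      apply h2
      have := lt_of_le_of_ne hxy (Ne.symm hy)
      rw [Fin.lt_def] at this
      rw [Fin.le_def]; omega
    · subst hy
      rw [Function.update_self, Function.update_of_ne hx]
      exact h2 (le_trans hxy (by rw [Fin.le_def]; omega))
    · rw [Function.update_of_ne hx, Function.update_of_ne hy]
      exact h2 hxy
  · intro k
    obtain ⟨i, hi⟩ := h3 k
    by_cases hij : i = j
    · exact ⟨q, by rw [Function.update_of_ne hqne, ← hi, hij]; exact Fin.ext hqj⟩
    · exact ⟨i, by rw [Function.update_of_ne hij, hi]⟩
  · intro k
    obtain ⟨i, hi⟩ := h4 k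
    by_cases hij : i = j
    · exact ⟨p, by rw [Function.update_of_ne hpne, ← hi, hij]; exact g0⟩
    · exact ⟨i, by rw [Function.update_of_ne hij, hi]⟩
  · intro i
    by_cases hij : i = j
    · rw [hij, Function.update_self, Function.update_self]; omega
    · rw [Function.update_of_ne hij, Function.update_of_ne hij]; exact h5 i
  · rw [Function.update_self]; exact hpj
  · intro i hi
    rw [Function.update_of_ne hi]

theorem immPred_data {m n : ℕ} {α β : Fin (m + n + 1) → Fin (m + 1)}
    {α' β' : Fin (m + n + 1) → Fin (n + 1)} (hα : IsShuffle m n α α')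
    (h : IsImmPred m n β β' α α') :
    ∃ p j q : Fin (m + n + 1), (j : ℕ) = p + 1 ∧ (q : ℕ) = j + 1 ∧
      (α j : ℕ) = α p + 1 ∧ (α q : ℕ) = α j ∧ (α j : ℕ) = β j + 1 ∧
      ∀ i, i ≠ j → β i = α i := by
  obtain ⟨hβ, hlt, hno⟩ := h
  obtain ⟨p, j, q, hp, hq, hj, hpj, hqj⟩ := exists_corner_s11 hα hβ hlt
  obtain ⟨γ, γ', hγ, hγj, hγi⟩ := exists_lower hα p j q hp hq hpj hqj
  have hlow : ShuffleLT m n γ α := by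
    refine ⟨fun i => ?_, fun h => ?_⟩
    · by_cases hij : i = j
      · rw [hij, Fin.le_def]; omega
      · exact (hγi i hij).le
    · rw [h] at hγj; omega
  have hle : ShuffleLE m n β γ := by
    intro i
    by_cases hij : i = j
    · rw [hij, Fin.le_def]; omega
    · rw [hγi i hij]; exact hlt.1 i
  have hEq : β = γ := by
    by_contra hc
    exact hno γ γ' hγ ⟨⟨hle, hc⟩, hlow⟩
  subst hEq
  exact ⟨p, j, q, hp, hq, hpj, hqj, hγj, hγi⟩

/-- Let `⟨β,β'⟩ < ⟨α,α'⟩` be shuffles. Then `⟨β,β'⟩` is an immediate predecessor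
of `⟨α,α'⟩` iff there is exactly one index where `β` and `α` differ; in that case
this index lies in the lower-right corner set of `⟨α,α'⟩` and `α j = β j + 1`. -/
theorem immPred_iff_unique_ne (m n : ℕ)
    (α : Fin (m + n + 1) → Fin (m + 1)) (α' : Fin (m + n + 1) → Fin (n + 1))
    (β : Fin (m + n + 1) → Fin (m + 1)) (β' : Fin (m + n + 1) → Fin (n + 1))
    (hα : IsShuffle m n α α') (hβ : IsShuffle m n β β')
    (hlt : ShuffleLT m n β α) :
    (IsImmPred m n β β' α α' ↔ ∃! j : Fin (m + n + 1), β j ≠ α j) ∧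
    (IsImmPred m n β β' α α' →
      ∀ j : Fin (m + n + 1), β j ≠ α j →
        (j : ℕ) ∈ lrCorner m n α ∧ (α j : ℕ) = (β j : ℕ) + 1) := by
  refine ⟨⟨fun h => ?_, fun h => ?_⟩, fun h i hi => ?_⟩
  · obtain ⟨p, j, q, hp, hq, hpj, hqj, hj, hne⟩ := immPred_data hα h
    refine ⟨j, fun h => ?_, fun i hi => ?_⟩
    · rw [h] at hj; omega
    · by_contra hc
      exact hi (hne i hc)
  · obtain ⟨j, hj, huniq⟩ := h
    have hoff : ∀ i, i ≠ j → β i = α i := fun i hi => by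
      by_contra hc
      exact hi (huniq i hc)
    have hjlt : (β j : ℕ) < α j := lt_of_le_of_ne (hlt.1 j) (fun h => hj (Fin.ext h))
    obtain ⟨h1, h2⟩ := shuffle_lt_interior hα hβ j hjlt
    let p : Fin (m + n + 1) := ⟨j - 1, by omega⟩
    have hp : (j : ℕ) = p + 1 := by simp only [p]; omega
    have hpne : p ≠ j := fun h => by rw [h] at hp; omega
    have sα := shuffle_step hα p j hp
    have sβ := shuffle_step hβ p j hp
    rw [hoff p hpne] at sβ
    refine ⟨hβ, hlt, ?_⟩
    rintro γ γ' - ⟨⟨hbg, hbg'⟩, ⟨hga, hga'⟩⟩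
    have hγ : ∀ i, i ≠ j → γ i = α i := fun i hi =>
      le_antisymm (hga i) (by rw [← hoff i hi]; exact hbg i)
    have g1 : (β j : ℕ) ≤ γ j := hbg j
    have g2 : (γ j : ℕ) ≤ α j := hga j
    by_cases hc : (γ j : ℕ) = α j
    · apply hga'
      funext i
      by_cases hi : i = j
      · rw [hi]; exact Fin.ext hc
      · exact hγ i hi
    · apply hbg'
      funext i
      by_cases hi : i = j
      · rw [hi]; exact Fin.ext (by omega)
      · rw [hγ i hi]; exact hoff i hi
  · obtain ⟨p, j, q, hp, hq, hpj, hqj, hj, hne⟩ := immPred_data hα h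
    have hij : i = j := by
      by_contra hc
      exact hi (hne i hc)
    subst hij
    have hext : ∀ k : Fin (m + n + 1), extendFin α (k : ℕ) = α k := fun k => by
      unfold extendFin
      congr 2
      exact Fin.ext (by have := k.2; simp only; omega)
    refine ⟨⟨by omega, by have := q.2; omega, ?_, ?_⟩, hj⟩
    · rw [← hq, hext, hext, hqj]
    · have : (i : ℕ) - 1 = p := by omega
      rw [this, hext, hext, hpj]
end
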